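/- Let 𝔤 be a complex simple Lie algebra regarded as a real Lie algebra with complex structure J, and 𝔥 a real semisimple Lie subalgebra with ρ_𝔥 ≰ ρ_{𝔤/𝔥}. Then 𝔥₀ := 𝔥 ∩ J𝔥 is a complex ideal of 𝔥, 𝔥 = 𝔥₀ ⊕ 𝔥₁ for a totally real ideal 𝔥₁ (i.e. 𝔥₁ ∩ J𝔥₁ = 0), and ρ_{𝔥₀} ≰ ρ_{𝔤/𝔥₀}. -/

import Mathlib

open Module TensorProduct

/-- Half the sum of `|Re λ|` over the complex eigenvalues `λ` (with multiplicity) of a real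
endomorphism of a finite-dimensional real vector space. -/
noncomputable def rho {V : Type*} [AddCommGroup V] [Module ℝ V] [Module.Finite ℝ V]
    (f : Module.End ℝ V) : ℝ :=
  (1 / 2) * (((f.baseChange ℂ : Module.End ℂ (ℂ ⊗[ℝ] V)).charpoly.roots.map
    fun z => |z.re|)).sum

/-!
For `ad x` with `x ∈ 𝔥`, `ρ` is additive on exact sequences of `𝔥`-modules. The ideal
`𝔥₀ = 𝔥 ∩ J𝔥` is the kernel of the homomorphism `x ↦ [J x]` from `𝔥` to `𝔤/𝔥`, and its
complementary ideal `𝔥₁` embeds into `𝔤/𝔥` with some quotient `Q`. Cancelling `ρ_{𝔥₁}`, the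
hypothesis `ρ_𝔥(x) > ρ_{𝔤/𝔥}(x)` becomes `ρ_{𝔥/𝔥₁}(x) > ρ_Q(x)`.

Write `x = x₀ + x₁` with `xᵢ ∈ 𝔥ᵢ`. The left side depends on `x₀` only. On the right, `𝔥₁`
commutes with `x₀`, so it preserves the generalized eigenspaces of `x₀` on `ℂ ⊗ Q`, and as
`𝔥₁ = [𝔥₁, 𝔥₁]`, `x₁` has trace `0` on each of them. There `x₀` contributes the absolute value of
the real part of its trace, which is also the trace of `x`, so `ρ_Q(x₀) ≤ ρ_Q(x)`. Hence `x₀` is a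
witness too, and since `ad x₀` maps `𝔥` into `𝔥₀`, replacing `𝔥` by `𝔥₀` changes neither side.
-/

open Function

section Exact

variable {K U V W : Type*} [Field K] [AddCommGroup U] [Module K U]
  [AddCommGroup V] [Module K V] [AddCommGroup W] [Module K W]
  {i : U →ₗ[K] V} {p : V →ₗ[K] W} {f : End K U} {g : End K V} {h : End K W}

theorem det_eq_mul_of_exact [Module.Finite K V] (hi : Injective i) (hip : Exact i p)
    (hp : Surjective p) (hif : i ∘ₗ f = g ∘ₗ i) (hpg : p ∘ₗ g = h ∘ₗ p) :
    LinearMap.det g = LinearMap.det f * LinearMap.det h := by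
  have hg : LinearMap.range i ≤ (LinearMap.range i).comap g := by
    rintro _ ⟨u, rfl⟩
    exact ⟨f u, LinearMap.congr_fun hif u⟩
  let eU : U ≃ₗ[K] LinearMap.range i := LinearEquiv.ofInjective i hi
  let eW : (V ⧸ LinearMap.range i) ≃ₗ[K] W := hip.linearEquivOfSurjective hp
  have hf : (eU : U →ₗ[K] _) ∘ₗ f ∘ₗ eU.symm = g.restrict (q := LinearMap.range i) hg := by
    ext u
    obtain ⟨u, rfl⟩ := eU.surjective u
    simpa [eU] using LinearMap.congr_fun hif u
  have heW (v : V) : eW (Submodule.Quotient.mk v) = p v := rfl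
  have hh : (eW : _ →ₗ[K] W) ∘ₗ (LinearMap.range i).mapQ _ g hg ∘ₗ eW.symm = h := by
    ext w
    obtain ⟨v, rfl⟩ := hp w
    simpa [← heW] using LinearMap.congr_fun hpg v
  rw [LinearMap.det_eq_det_mul_det _ g hg, ← hf, LinearMap.det_conj, ← hh, LinearMap.det_conj]

theorem charpoly_eq_mul_of_exact [Infinite K] [Module.Finite K U] [Module.Finite K V]
    [Module.Finite K W] (hi : Injective i) (hip : Exact i p) (hp : Surjective p)
    (hif : i ∘ₗ f = g ∘ₗ i) (hpg : p ∘ₗ g = h ∘ₗ p) :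
    g.charpoly = f.charpoly * h.charpoly := by
  refine Polynomial.funext fun t => ?_
  simp only [Polynomial.eval_mul, LinearMap.eval_charpoly]
  refine det_eq_mul_of_exact hi hip hp ?_ ?_
  · ext u
    simpa using LinearMap.congr_fun hif u
  · ext v
    simpa using LinearMap.congr_fun hpg v

end Exact

/-- The sum of `|Re λ|` over the eigenvalues `λ` of a complex endomorphism, with multiplicity:
twice the value of `rho` on a real form. -/
noncomputable def sumAbsReEigenvalues {V : Type*} [AddCommGroup V] [Module ℂ V] [Module.Finite ℂ V]
    (f : End ℂ V) : ℝ :=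
  (f.charpoly.roots.map fun z => |z.re|).sum

section SumAbsReEigenvalues

variable {U V W : Type*} [AddCommGroup U] [Module ℂ U] [Module.Finite ℂ U] [AddCommGroup V]
  [Module ℂ V] [Module.Finite ℂ V] [AddCommGroup W] [Module ℂ W] [Module.Finite ℂ W]

theorem sumAbsReEigenvalues_eq_add_of_exact {i : U →ₗ[ℂ] V} {p : V →ₗ[ℂ] W} {f : End ℂ U}
    {g : End ℂ V} {h : End ℂ W} (hi : Injective i) (hip : Exact i p) (hp : Surjective p)
    (hif : i ∘ₗ f = g ∘ₗ i) (hpg : p ∘ₗ g = h ∘ₗ p) :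
    sumAbsReEigenvalues g = sumAbsReEigenvalues f + sumAbsReEigenvalues h := by
  simp only [sumAbsReEigenvalues, charpoly_eq_mul_of_exact hi hip hp hif hpg,
    Polynomial.roots_mul (f.charpoly_monic.mul h.charpoly_monic).ne_zero, Multiset.map_add,
    Multiset.sum_add]

theorem abs_re_trace_le_sumAbsReEigenvalues (f : End ℂ V) :
    |(LinearMap.trace ℂ V f).re| ≤ sumAbsReEigenvalues f := by
  rw [End.trace_eq_sum_roots_charpoly_of_splits (IsAlgClosed.splits _), sumAbsReEigenvalues]
  have hre : f.charpoly.roots.sum.re = (f.charpoly.roots.map Complex.re).sum :=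
    map_multiset_sum Complex.reAddGroupHom _
  simpa [hre, Multiset.map_map] using
    Multiset.abs_sum_le_sum_abs (s := f.charpoly.roots.map Complex.re)

open Polynomial in
theorem sumAbsReEigenvalues_eq_abs_re_trace {f : End ℂ V} {a : ℂ}
    (hf : IsNilpotent (f - algebraMap ℂ (End ℂ V) a)) :
    sumAbsReEigenvalues f = |(LinearMap.trace ℂ V f).re| := by
  have hroots : f.charpoly.roots = Multiset.replicate (finrank ℂ V) a := by
    have hcomp : f.charpoly.comp (C 1 * X + C a) = X ^ finrank ℂ V := by
      rw [C_1, one_mul, ← LinearMap.charpoly_sub_smul, ← Algebra.algebraMap_eq_smul_one,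
        hf.charpoly_eq_X_pow_finrank]
    rw [← map_roots_comp_C_mul_X_add_C _ 1 a isUnit_one, hcomp, roots_X_pow,
      Multiset.nsmul_singleton]
    simp
  rw [End.trace_eq_sum_roots_charpoly_of_splits (IsAlgClosed.splits _), sumAbsReEigenvalues, hroots]
  simp [abs_mul]

end SumAbsReEigenvalues

theorem rho_eq_half_sumAbsReEigenvalues {V : Type*} [AddCommGroup V] [Module ℝ V]
    [Module.Finite ℝ V] (f : End ℝ V) : rho f = 1 / 2 * sumAbsReEigenvalues (f.baseChange ℂ) :=
  rfl

section Rho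

variable {U V W : Type*} [AddCommGroup U] [Module ℝ U] [Module.Finite ℝ U] [AddCommGroup V]
  [Module ℝ V] [Module.Finite ℝ V] [AddCommGroup W] [Module ℝ W] [Module.Finite ℝ W]

theorem rho_zero : rho (0 : End ℝ V) = 0 := by
  simp [rho, IsNilpotent.zero.charpoly_eq_X_pow_finrank, Multiset.map_nsmul, Multiset.sum_nsmul]

theorem rho_eq_add_of_exact {i : U →ₗ[ℝ] V} {p : V →ₗ[ℝ] W} {f : End ℝ U} {g : End ℝ V}
    {h : End ℝ W} (hi : Injective i) (hip : Exact i p) (hp : Surjective p)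
    (hif : i ∘ₗ f = g ∘ₗ i) (hpg : p ∘ₗ g = h ∘ₗ p) : rho g = rho f + rho h := by
  rw [rho_eq_half_sumAbsReEigenvalues, sumAbsReEigenvalues_eq_add_of_exact
    (Module.Flat.lTensor_preserves_injective_linearMap (M := ℂ) i hi) (lTensor_exact ℂ hip hp)
    (LinearMap.lTensor_surjective ℂ hp) (i := i.baseChange ℂ) (p := p.baseChange ℂ)
    (f := f.baseChange ℂ) (h := h.baseChange ℂ), mul_add]
  · rfl
  · rw [← LinearMap.baseChange_comp, hif, LinearMap.baseChange_comp]
  · rw [← LinearMap.baseChange_comp, hpg, LinearMap.baseChange_comp]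

theorem rho_eq_rho_restrict_add_rho_mapQ (f : End ℝ V) {p : Submodule ℝ V} (hp : p ≤ p.comap f) :
    rho f = rho (f.restrict (q := p) hp) + rho (p.mapQ p f hp) :=
  rho_eq_add_of_exact p.subtype_injective (LinearMap.exact_subtype_mkQ p) p.mkQ_surjective rfl rfl

theorem rho_restrict_eq_rho_restrict_of_le_comap {f : End ℝ V} {p q : Submodule ℝ V} (hpq : p ≤ q)
    (hq : q ≤ p.comap f) :
    rho (f.restrict (q := q) fun _ hx => hpq (hq hx)) =
      rho (f.restrict (q := p) fun _ hx => hq (hpq hx)) := by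
  have hexact : Exact (Submodule.inclusion hpq) (p.submoduleOf q).mkQ := by
    rw [LinearMap.exact_iff, Submodule.ker_mkQ, Submodule.range_inclusion]
    rfl
  have hzero : (p.submoduleOf q).mkQ ∘ₗ f.restrict (q := q) (fun _ hx => hpq (hq hx)) =
      0 ∘ₗ (p.submoduleOf q).mkQ := by
    ext x
    exact (Submodule.Quotient.mk_eq_zero _).mpr (hq x.2)
  rw [rho_eq_add_of_exact (f := f.restrict (q := p) fun _ hx => hq (hpq hx))
    (Submodule.inclusion_injective hpq) hexact (Submodule.mkQ_surjective _) rfl hzero,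
    rho_zero, add_zero]

theorem rho_mapQ_lt_rho_restrict_comap_iff {f : End ℝ V} {p q : Submodule ℝ V}
    (hp : p ≤ p.comap f) (hq : q ≤ q.comap f) (hpq : p ≤ q) (hqp : q ≤ p.comap f) :
    rho (p.mapQ p f hp) < rho (f.restrict (q := p.comap f) fun _ hx => hp hx) ↔
      rho (q.mapQ q f hq) < rho (f.restrict (q := q) hq) := by
  have hpf := rho_eq_rho_restrict_add_rho_mapQ f hp
  have hqf := rho_eq_rho_restrict_add_rho_mapQ f hq
  have hpc := rho_restrict_eq_rho_restrict_of_le_comap hp le_rfl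
  have hpq' := rho_restrict_eq_rho_restrict_of_le_comap hpq hqp
  constructor <;> intro <;> linarith

end Rho

section LieModuleEnd

variable {R L M : Type*} [CommRing R] [LieRing L] [LieAlgebra R L] [AddCommGroup M] [Module R M]
  [LieRingModule L M] [LieModule R L M]

/-- The maximal generalized eigenspace of an endomorphism commuting with the action of `L`, as a
Lie submodule, so that elements of `[L, L]` act on it with trace `0`. -/
def maxGenEigenspaceLieSubmodule (f : End R M) (hf : ∀ x, Commute f (LieModule.toEnd R L M x))
    (a : R) : LieSubmodule R L M where
  __ := f.maxGenEigenspace a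
  lie_mem {x} _ hm := End.mapsTo_maxGenEigenspace_of_comm (hf x) a hm

theorem trace_toEnd_eq_zero_of_mem_lie_top_top {x : L}
    (hx : x ∈ ⁅(⊤ : LieIdeal R L), (⊤ : LieIdeal R L)⁆) :
    LinearMap.trace R M (LieModule.toEnd R L M x) = 0 :=
  LieModule.trace_toEnd_eq_zero_of_mem_lcs R L M le_rfl
    (by rwa [LieModule.lowerCentralSeries_succ, LieModule.lowerCentralSeries_zero])

end LieModuleEnd

section Complex

variable {L V : Type*} [LieRing L] [LieAlgebra ℂ L] [AddCommGroup V] [Module ℂ V]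
  [Module.Finite ℂ V] [LieRingModule L V] [LieModule ℂ L V] {x : L}

theorem sumAbsReEigenvalues_le_add_toEnd_of_isNilpotent_sub
    (hx : x ∈ ⁅(⊤ : LieIdeal ℂ L), (⊤ : LieIdeal ℂ L)⁆) {f : End ℂ V} {a : ℂ}
    (hf : IsNilpotent (f - algebraMap ℂ (End ℂ V) a)) :
    sumAbsReEigenvalues f ≤ sumAbsReEigenvalues (f + LieModule.toEnd ℂ L V x) := by
  have htrace : LinearMap.trace ℂ V f = LinearMap.trace ℂ V (f + LieModule.toEnd ℂ L V x) := by
    rw [map_add, trace_toEnd_eq_zero_of_mem_lie_top_top hx, add_zero]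
  rw [sumAbsReEigenvalues_eq_abs_re_trace hf, htrace]
  exact abs_re_trace_le_sumAbsReEigenvalues _

theorem sumAbsReEigenvalues_le_add_toEnd (hx : x ∈ ⁅(⊤ : LieIdeal ℂ L), (⊤ : LieIdeal ℂ L)⁆)
    (f : End ℂ V) (hf : ∀ y, Commute f (LieModule.toEnd ℂ L V y)) :
    sumAbsReEigenvalues f ≤ sumAbsReEigenvalues (f + LieModule.toEnd ℂ L V x) := by
  induction hn : finrank ℂ V using Nat.strong_induction_on generalizing V with | _ n ih
  subst hn
  rcases subsingleton_or_nontrivial V with hV | hV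
  · rw [Subsingleton.elim (f + _) f]
  obtain ⟨a, ha⟩ := End.exists_eigenvalue f
  let N := maxGenEigenspaceLieSubmodule f hf a
  have hfN : N.toSubmodule ≤ N.toSubmodule.comap f :=
    End.mapsTo_maxGenEigenspace_of_comm (Commute.refl f) a
  let fN : End ℂ N := f.restrict (q := N.toSubmodule) hfN
  let fQ : End ℂ (V ⧸ N) := N.toSubmodule.mapQ _ f hfN
  have hfQ (y : L) : Commute fQ (LieModule.toEnd ℂ L (V ⧸ N) y) :=
    Submodule.linearMap_qext _ <| LinearMap.ext fun v =>
      congrArg N.toSubmodule.mkQ (LinearMap.congr_fun (hf y) v)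
  have hlt : finrank ℂ (V ⧸ N.toSubmodule) < finrank ℂ V := by
    have hpos : 0 < finrank ℂ N.toSubmodule := Submodule.one_le_finrank_iff.mpr fun hbot =>
      ha (eq_bot_iff.mpr (hbot ▸ End.eigenspace_le_maxGenEigenspace))
    have := N.toSubmodule.finrank_quotient_add_finrank
    lia
  have hN : sumAbsReEigenvalues fN ≤ sumAbsReEigenvalues (fN + LieModule.toEnd ℂ L N x) :=
    sumAbsReEigenvalues_le_add_toEnd_of_isNilpotent_sub hx
      (End.isNilpotent_restrict_maxGenEigenspace_sub_algebraMap f a)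
  have hQ : sumAbsReEigenvalues fQ ≤ sumAbsReEigenvalues (fQ + LieModule.toEnd ℂ L (V ⧸ N) x) :=
    ih _ hlt fQ hfQ rfl
  calc sumAbsReEigenvalues f = sumAbsReEigenvalues fN + sumAbsReEigenvalues fQ :=
        sumAbsReEigenvalues_eq_add_of_exact N.toSubmodule.subtype_injective
          (LinearMap.exact_subtype_mkQ _) N.toSubmodule.mkQ_surjective rfl rfl
    _ ≤ _ := add_le_add hN hQ
    _ = sumAbsReEigenvalues (f + LieModule.toEnd ℂ L V x) :=
        (sumAbsReEigenvalues_eq_add_of_exact N.toSubmodule.subtype_injective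
          (LinearMap.exact_subtype_mkQ _) N.toSubmodule.mkQ_surjective rfl rfl).symm

end Complex

section BaseChange

theorem tmul_mem_lie_top_top {R A L : Type*} [CommRing R] [CommRing A] [Algebra R A] [LieRing L]
    [LieAlgebra R L] {x : L} (hx : x ∈ ⁅(⊤ : LieIdeal R L), (⊤ : LieIdeal R L)⁆) (a : A) :
    a ⊗ₜ[R] x ∈ ⁅(⊤ : LieIdeal A (A ⊗[R] L)), (⊤ : LieIdeal A (A ⊗[R] L))⁆ := by
  simpa only [LieSubmodule.lie_baseChange, LieSubmodule.baseChange_top] using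
    LieSubmodule.tmul_mem_baseChange_of_mem a hx

theorem commute_baseChange_toEnd {R A L M : Type*} [CommRing R] [CommRing A] [Algebra R A]
    [LieRing L] [LieAlgebra R L] [AddCommGroup M] [Module R M] [LieRingModule L M]
    [LieModule R L M] {f : End R M} (hf : ∀ x, Commute f (LieModule.toEnd R L M x))
    (z : A ⊗[R] L) : Commute (f.baseChange A) (LieModule.toEnd A (A ⊗[R] L) (A ⊗[R] M) z) := by
  induction z with
  | zero => simp
  | add z w hz hw => simpa only [map_add] using hz.add_right hw
  | tmul a x =>
    ext m
    simpa using congrArg (a ⊗ₜ[R] ·) (LinearMap.congr_fun (hf x) m)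

theorem rho_le_rho_add_toEnd {L M : Type*} [LieRing L] [LieAlgebra ℝ L] [AddCommGroup M]
    [Module ℝ M] [Module.Finite ℝ M] [LieRingModule L M] [LieModule ℝ L M] {x : L}
    (hx : x ∈ ⁅(⊤ : LieIdeal ℝ L), (⊤ : LieIdeal ℝ L)⁆) {f : End ℝ M}
    (hf : ∀ y, Commute f (LieModule.toEnd ℝ L M y)) :
    rho f ≤ rho (f + LieModule.toEnd ℝ L M x) := by
  rw [rho_eq_half_sumAbsReEigenvalues, rho_eq_half_sumAbsReEigenvalues, LinearMap.baseChange_add,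
    ← LieModule.toEnd_baseChange]
  gcongr
  exact sumAbsReEigenvalues_le_add_toEnd (tmul_mem_lie_top_top hx 1) _ (commute_baseChange_toEnd hf)

end BaseChange

/-- The function `ρ_M` of a module `M` over a real Lie algebra `L`, with `M` explicit so that
`ρ_𝔥` and `ρ_{𝔤/𝔥}` are both instances of it, over the same Lie algebra `𝔥`. -/
noncomputable def moduleRho {L : Type*} [LieRing L] [LieAlgebra ℝ L] (M : Type*) [AddCommGroup M]
    [Module ℝ M] [Module.Finite ℝ M] [LieRingModule L M] [LieModule ℝ L M] (x : L) : ℝ :=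
  rho (LieModule.toEnd ℝ L M x)

section ModuleRho

variable {L M N : Type*} [LieRing L] [LieAlgebra ℝ L] [AddCommGroup M] [Module ℝ M]
  [Module.Finite ℝ M] [LieRingModule L M] [LieModule ℝ L M] [AddCommGroup N] [Module ℝ N]
  [Module.Finite ℝ N] [LieRingModule L N] [LieModule ℝ L N]

theorem moduleRho_add_of_lie_eq_zero {x y : L} (hy : ∀ m : M, ⁅y, m⁆ = 0) :
    moduleRho M (x + y) = moduleRho M x := by
  rw [moduleRho, map_add, LinearMap.ext (f := LieModule.toEnd ℝ L M y) (g := 0) hy, add_zero]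
  rfl

theorem moduleRho_eq_add_quotient_range {φ : N →ₗ⁅ℝ,L⁆ M} (hφ : Injective φ) (x : L) :
    moduleRho M x = moduleRho N x + moduleRho (M ⧸ φ.range) x := by
  refine rho_eq_add_of_exact (i := (φ : N →ₗ[ℝ] M)) hφ ?_ (Submodule.mkQ_surjective _) ?_
    (LieSubmodule.Quotient.toEnd_comp_mk' _ x).symm
  · exact LinearMap.exact_map_mkQ_range (φ : N →ₗ[ℝ] M)
  · ext n
    simp

theorem moduleRho_le_moduleRho_add {I : LieIdeal ℝ L} {x y : L} (hx : ∀ z ∈ I, ⁅x, z⁆ = 0)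
    (hy : y ∈ ⁅I, I⁆) : moduleRho M x ≤ moduleRho M (x + y) := by
  have hyI : y ∈ I := LieSubmodule.lie_le_right I I hy
  have hy' : (⟨y, hyI⟩ : I) ∈ ⁅(⊤ : LieIdeal ℝ I), (⊤ : LieIdeal ℝ I)⁆ := by
    rw [← LieIdeal.comap_incl_self, LieIdeal.comap_bracket_incl_of_le I le_rfl le_rfl]
    exact hy
  rw [moduleRho, moduleRho, map_add]
  exact rho_le_rho_add_toEnd (L := I) hy' fun z => LinearMap.ext fun m => by
    simpa [hx z z.2] using (leibniz_lie x (z : L) m)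

end ModuleRho

section Semisimple

theorem lie_self_eq_of_isSemisimple {R L : Type*} [CommRing R] [LieRing L] [LieAlgebra R L]
    [LieAlgebra.IsSemisimple R L] (I : LieIdeal R L) : ⁅I, I⁆ = I := by
  refine le_antisymm (LieSubmodule.lie_le_right I I) ?_
  obtain ⟨T, hT, rfl⟩ := (LieAlgebra.IsSemisimple.booleanGenerators (R := R) (L := L)).atomistic I
    (by simp)
  refine sSup_le fun A hA => ?_
  rw [← lie_eq_self_of_isAtom_of_nonabelian A (hT hA)
    (LieAlgebra.IsSemisimple.non_abelian_of_isAtom A (hT hA))]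
  exact LieSubmodule.mono_lie (le_sSup hA) (le_sSup hA)

theorem lie_eq_zero_of_disjoint {R L : Type*} [CommRing R] [LieRing L] [LieAlgebra R L]
    {I J : LieIdeal R L} (hIJ : Disjoint I J) {x y : L} (hx : x ∈ I) (hy : y ∈ J) : ⁅x, y⁆ = 0 := by
  simpa only [hIJ.eq_bot, LieSubmodule.mem_bot] using
    LieSubmodule.lie_le_inf _ _ (LieSubmodule.lie_mem_lie hx hy)

theorem injective_comp_incl_of_disjoint_ker {R L M N : Type*} [CommRing R] [LieRing L]
    [LieAlgebra R L] [AddCommGroup M] [Module R M] [LieRingModule L M] [AddCommGroup N]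
    [Module R N] [LieRingModule L N] {ψ : M →ₗ⁅R,L⁆ N} {K : LieSubmodule R L M}
    (h : Disjoint ψ.ker K) : Injective (ψ.comp K.incl) := by
  refine (injective_iff_map_eq_zero (ψ.comp K.incl)).mpr fun m hm => Subtype.ext ?_
  have : (m : M) ∈ ψ.ker ⊓ K := ⟨ψ.mem_ker.mpr hm, m.2⟩
  rwa [h.eq_bot, LieSubmodule.mem_bot] at this

theorem exists_mem_ker_moduleRho_lt {L P : Type*} [LieRing L] [LieAlgebra ℝ L]
    [LieAlgebra.IsSemisimple ℝ L] [Module.Finite ℝ L] [AddCommGroup P] [Module ℝ P]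
    [Module.Finite ℝ P] [LieRingModule L P] [LieModule ℝ L P] (ψ : L →ₗ⁅ℝ,L⁆ P) {x : L}
    (hx : moduleRho P x < moduleRho L x) : ∃ x₀ ∈ ψ.ker, moduleRho P x₀ < moduleRho L x₀ := by
  let I : LieIdeal ℝ L := ψ.kerᶜ
  have hI : Disjoint ψ.ker I := disjoint_compl_right
  obtain ⟨x₀, hx₀, x₁, hx₁, rfl⟩ : ∃ x₀ ∈ ψ.ker, ∃ x₁ ∈ I, x₀ + x₁ = x :=
    (LieSubmodule.mem_sup _ _ _).mp (by rw [sup_compl_eq_top]; trivial)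
  let ι : I →ₗ⁅ℝ,L⁆ L := LieSubmodule.incl I
  let φ : I →ₗ⁅ℝ,L⁆ P := ψ.comp ι
  have hL := moduleRho_eq_add_quotient_range (φ := ι) (LieSubmodule.injective_incl I)
  have hP := moduleRho_eq_add_quotient_range (φ := φ) (injective_comp_incl_of_disjoint_ker hI)
  have hx₁L : moduleRho (L ⧸ ι.range) (x₀ + x₁) = moduleRho (L ⧸ ι.range) x₀ := by
    refine moduleRho_add_of_lie_eq_zero fun m => ?_
    obtain ⟨y, rfl⟩ := LieSubmodule.Quotient.surjective_mk' _ m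
    rw [← LieModuleHom.map_lie, LieSubmodule.Quotient.mk_eq_zero, LieSubmodule.range_incl]
    exact lie_mem_left ℝ L I x₁ y hx₁
  have hx₁P : moduleRho (P ⧸ φ.range) x₀ ≤ moduleRho (P ⧸ φ.range) (x₀ + x₁) :=
    moduleRho_le_moduleRho_add (fun z hz => lie_eq_zero_of_disjoint hI hx₀ hz)
      ((lie_self_eq_of_isSemisimple I).symm ▸ hx₁)
  refine ⟨x₀, hx₀, ?_⟩
  linarith [hL x₀, hP x₀, hL (x₀ + x₁), hP (x₀ + x₁)]

end Semisimple

section ComplexPart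

variable {R L : Type*} [CommRing R] [LieRing L] [LieAlgebra R L]

/-- The largest complex subspace `𝔥 ∩ J𝔥` of a subalgebra `𝔥`, for a complex structure `J`, as an
`𝔥`-submodule of `L`. It is encoded as `𝔥 ∩ J⁻¹𝔥`, which agrees with `𝔥 ∩ J𝔥` when `J² = -1`. -/
def complexPart (J : L →ₗ⁅R,L⁆ L) (𝔥 : LieSubalgebra R L) : LieSubmodule R 𝔥 L :=
  𝔥.toLieSubmodule ⊓ 𝔥.toLieSubmodule.comap (J.restrictLie 𝔥)

/-- The homomorphism `x ↦ [J x]` of `𝔥`-modules from `𝔥` to `L / 𝔥`. It exhibits `complexPart J 𝔥`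
as a kernel, hence as an ideal of `𝔥`, whose complements embed into `L / 𝔥`. -/
def complexPartHom (J : L →ₗ⁅R,L⁆ L) (𝔥 : LieSubalgebra R L) :
    𝔥 →ₗ⁅R,𝔥⁆ L ⧸ 𝔥.toLieSubmodule :=
  (LieSubmodule.Quotient.mk' 𝔥.toLieSubmodule).comp ((J.restrictLie 𝔥).comp 𝔥.incl')

variable {J : L →ₗ⁅R,L⁆ L} {𝔥 : LieSubalgebra R L}

theorem mem_complexPart {x : L} : x ∈ complexPart J 𝔥 ↔ x ∈ 𝔥 ∧ J x ∈ 𝔥 :=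
  Iff.rfl

theorem mem_ker_complexPartHom {x : 𝔥} :
    x ∈ (complexPartHom J 𝔥).ker ↔ (x : L) ∈ complexPart J 𝔥 :=
  ((complexPartHom J 𝔥).mem_ker.trans
    (LieSubmodule.Quotient.mk_eq_zero' (N := 𝔥.toLieSubmodule))).trans (and_iff_right x.2).symm

theorem map_incl'_ker_complexPartHom :
    (complexPartHom J 𝔥).ker.map 𝔥.incl' = complexPart J 𝔥 := by
  ext x
  simp only [LieSubmodule.mem_map, mem_ker_complexPartHom]
  constructor
  · rintro ⟨y, hy, rfl⟩
    exact hy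
  · exact fun hx => ⟨⟨x, hx.1⟩, hx, rfl⟩

theorem complexPart_toSubmodule (hJ : ∀ x, J (J x) = -x) :
    (complexPart J 𝔥).toSubmodule = 𝔥.toSubmodule ⊓ 𝔥.toSubmodule.map (J : L →ₗ[R] L) := by
  ext x
  refine and_congr_right fun _ => ⟨fun hx => ⟨-J x, 𝔥.neg_mem hx, by simp [hJ]⟩, ?_⟩
  rintro ⟨y, hy, rfl⟩
  exact (congrArg (· ∈ 𝔥) (hJ y)).mpr (𝔥.neg_mem hy)

theorem apply_mem_complexPart (hJ : ∀ x, J (J x) = -x) {x : L} (hx : x ∈ complexPart J 𝔥) :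
    J x ∈ complexPart J 𝔥 := by
  rw [mem_complexPart, hJ]
  exact ⟨hx.2, 𝔥.neg_mem hx.1⟩

theorem exists_complexPart_compl (J : L →ₗ⁅R,L⁆ L) (𝔥 : LieSubalgebra R L)
    [LieAlgebra.IsSemisimple R 𝔥] :
    ∃ K : LieSubmodule R 𝔥 L,
      complexPart J 𝔥 ⊓ K = ⊥ ∧ complexPart J 𝔥 ⊔ K = 𝔥.toLieSubmodule := by
  refine ⟨LieSubmodule.map 𝔥.incl' (complexPartHom J 𝔥).kerᶜ, ?_, ?_⟩
  · rw [← map_incl'_ker_complexPartHom, ← LieSubmodule.map_inf 𝔥.toSubmodule.subtype_injective,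
      inf_compl_eq_bot, LieSubmodule.map_bot]
  · rw [← map_incl'_ker_complexPartHom, ← LieSubmodule.map_sup, sup_compl_eq_top,
      LieModuleHom.map_top]
    ext x
    simp

theorem inf_map_eq_bot_of_complexPart_inf_eq_bot (hJ : ∀ x, J (J x) = -x)
    {p : Submodule R L} (hp : p ≤ 𝔥.toSubmodule) (h : (complexPart J 𝔥).toSubmodule ⊓ p = ⊥) :
    p ⊓ p.map (J : L →ₗ[R] L) = ⊥ := by
  rw [eq_bot_iff, ← h, complexPart_toSubmodule hJ]
  exact le_inf (inf_le_inf hp (Submodule.map_mono hp)) inf_le_left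

end ComplexPart

-- The restriction maps to `p.comap (ad x)`, not to `p`: this is how the dependent type of
-- `LinearMap.restrict` elaborates when the invariance proof is `fun x hx => hmap hx`. By
-- `rho_restrict_eq_rho_restrict_of_le_comap` the value of `rho` is the same.
theorem rho_mapQ_lt_rho_restrict_iff_moduleRho_lt {L : Type*} [LieRing L] [LieAlgebra ℝ L]
    [Module.Finite ℝ L] {𝔥 : LieSubalgebra ℝ L} {p : Submodule ℝ L} (hp : p ≤ 𝔥.toSubmodule)
    {x : 𝔥} (hx : ∀ y ∈ 𝔥, ⁅(x : L), y⁆ ∈ p) (hmap : p ≤ p.comap (LieAlgebra.ad ℝ L x)) :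
    rho (p.mapQ p (LieAlgebra.ad ℝ L x) hmap) <
        rho ((LieAlgebra.ad ℝ L x).restrict (q := p.comap (LieAlgebra.ad ℝ L x))
          fun _ hy => hmap hy) ↔
      moduleRho (L ⧸ 𝔥.toLieSubmodule) x < moduleRho 𝔥 x :=
  rho_mapQ_lt_rho_restrict_comap_iff hmap (fun _ hy => 𝔥.lie_mem x.2 hy) hp hx

theorem complex_ideal_not_rho_le_general {L : Type*} [LieRing L] [LieAlgebra ℝ L]
    [Module.Finite ℝ L] {J : L →ₗ⁅ℝ,L⁆ L} (hJ : ∀ x, J (J x) = -x) {𝔥 : LieSubalgebra ℝ L}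
    [LieAlgebra.IsSemisimple ℝ 𝔥]
    (hwit : ∃ X : L, ∃ _ : X ∈ 𝔥,
      ∃ hmap : 𝔥.toSubmodule ≤ 𝔥.toSubmodule.comap (LieAlgebra.ad ℝ L X),
        rho (Submodule.mapQ 𝔥.toSubmodule 𝔥.toSubmodule (LieAlgebra.ad ℝ L X) hmap) <
          rho ((LieAlgebra.ad ℝ L X).restrict fun _ hx => hmap hx))
    {𝔥₀ : Submodule ℝ L} (h𝔥₀ : 𝔥₀ = 𝔥.toSubmodule ⊓ 𝔥.toSubmodule.map (J : L →ₗ[ℝ] L)) :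
    (∀ x ∈ 𝔥₀, J x ∈ 𝔥₀) ∧
    (∀ x ∈ 𝔥, ∀ y ∈ 𝔥₀, ⁅x, y⁆ ∈ 𝔥₀) ∧
    (∃ 𝔥₁ : Submodule ℝ L, 𝔥₁ ≤ 𝔥.toSubmodule ∧
      (∀ x ∈ 𝔥, ∀ y ∈ 𝔥₁, ⁅x, y⁆ ∈ 𝔥₁) ∧
      𝔥₀ ⊓ 𝔥₁ = ⊥ ∧ 𝔥₀ ⊔ 𝔥₁ = 𝔥.toSubmodule ∧
      𝔥₁ ⊓ 𝔥₁.map (J : L →ₗ[ℝ] L) = ⊥) ∧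
    (∃ X : L, ∃ _ : X ∈ 𝔥₀,
      ∃ hmap : 𝔥₀ ≤ 𝔥₀.comap (LieAlgebra.ad ℝ L X),
        rho (Submodule.mapQ 𝔥₀ 𝔥₀ (LieAlgebra.ad ℝ L X) hmap) <
          rho ((LieAlgebra.ad ℝ L X).restrict fun _ hx => hmap hx)) := by
  obtain rfl : 𝔥₀ = (complexPart J 𝔥).toSubmodule := h𝔥₀.trans (complexPart_toSubmodule hJ).symm
  have hlie (x) (hx : x ∈ 𝔥) (y) (hy : y ∈ complexPart J 𝔥) : ⁅x, y⁆ ∈ complexPart J 𝔥 :=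
    (complexPart J 𝔥).lie_mem (x := (⟨x, hx⟩ : 𝔥)) hy
  refine ⟨fun x hx => apply_mem_complexPart hJ hx, hlie, ?_, ?_⟩
  · obtain ⟨K, hinf, hsup⟩ := exists_complexPart_compl J 𝔥
    have hK : K ≤ 𝔥.toLieSubmodule := le_sup_right.trans_eq hsup
    rw [← LieSubmodule.toSubmodule_inj] at hinf hsup
    exact ⟨K, hK, fun x hx y hy => K.lie_mem (x := (⟨x, hx⟩ : 𝔥)) hy, hinf, hsup,
      inf_map_eq_bot_of_complexPart_inf_eq_bot hJ hK hinf⟩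
  · obtain ⟨X, hX, hmap, hlt⟩ := hwit
    rw [rho_mapQ_lt_rho_restrict_iff_moduleRho_lt (x := ⟨X, hX⟩) le_rfl
      (fun _ => 𝔥.lie_mem hX) hmap] at hlt
    obtain ⟨x₀, hker, hlt₀⟩ := exists_mem_ker_moduleRho_lt (complexPartHom J 𝔥) hlt
    have hx₀ : (x₀ : L) ∈ complexPart J 𝔥 := mem_ker_complexPartHom.mp hker
    have hle : (complexPart J 𝔥).toSubmodule ≤ 𝔥.toSubmodule := inf_le_left
    have hx₀lie (y) (hy : y ∈ 𝔥) : ⁅(x₀ : L), y⁆ ∈ complexPart J 𝔥 := by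
      simpa only [lie_skew, neg_mem_iff] using neg_mem (hlie y hy x₀ hx₀)
    exact ⟨x₀, hx₀, fun y hy => hx₀lie y (hle hy),
      (rho_mapQ_lt_rho_restrict_iff_moduleRho_lt hle hx₀lie _).mpr hlt₀⟩

/-- Let `𝔤` be a complex simple Lie algebra regarded as a real Lie algebra
with complex structure `J = i•`, and `𝔥` a real semisimple subalgebra with
`ρ_𝔥 ≰ ρ_{𝔤/𝔥}`.  Then `𝔥₀ := 𝔥 ∩ J𝔥` is a complex ideal of `𝔥`, `𝔥 = 𝔥₀ ⊕ 𝔥₁` for a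
totally real ideal `𝔥₁` (i.e. `𝔥₁ ∩ J𝔥₁ = 0`), and `ρ_{𝔥₀} ≰ ρ_{𝔤/𝔥₀}`. -/
theorem complex_ideal_not_rho_le
    (L : Type*) [LieRing L] [LieAlgebra ℝ L] [LieAlgebra ℂ L]
    [IsScalarTower ℝ ℂ L] [LieAlgebra.IsSimple ℂ L] [Module.Finite ℝ L]
    (J : L →ₗ[ℝ] L) (hJ : ∀ x : L, J x = (Complex.I : ℂ) • x)
    (𝔥 : LieSubalgebra ℝ L) [LieAlgebra.IsSemisimple ℝ 𝔥]
    -- `ρ_𝔥 ≰ ρ_{𝔤/𝔥}` : a witness `X ∈ 𝔥`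
    (hwit : ∃ X : L, ∃ _ : X ∈ 𝔥,
      ∃ hmap : 𝔥.toSubmodule ≤ 𝔥.toSubmodule.comap (LieAlgebra.ad ℝ L X),
        rho (Submodule.mapQ 𝔥.toSubmodule 𝔥.toSubmodule (LieAlgebra.ad ℝ L X) hmap) <
          rho ((LieAlgebra.ad ℝ L X).restrict fun x hx => hmap hx))
    (𝔥₀ : Submodule ℝ L) (h𝔥₀ : 𝔥₀ = 𝔥.toSubmodule ⊓ 𝔥.toSubmodule.map J) :
    -- `𝔥₀` is a complex (J-stable) ideal of `𝔥`
    (∀ x ∈ 𝔥₀, J x ∈ 𝔥₀) ∧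
    (∀ x ∈ 𝔥, ∀ y ∈ 𝔥₀, ⁅x, y⁆ ∈ 𝔥₀) ∧
    -- `𝔥 = 𝔥₀ ⊕ 𝔥₁` for a totally real ideal `𝔥₁`
    (∃ 𝔥₁ : Submodule ℝ L, 𝔥₁ ≤ 𝔥.toSubmodule ∧
      (∀ x ∈ 𝔥, ∀ y ∈ 𝔥₁, ⁅x, y⁆ ∈ 𝔥₁) ∧
      𝔥₀ ⊓ 𝔥₁ = ⊥ ∧ 𝔥₀ ⊔ 𝔥₁ = 𝔥.toSubmodule ∧
      𝔥₁ ⊓ 𝔥₁.map J = ⊥) ∧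
    -- `ρ_{𝔥₀} ≰ ρ_{𝔤/𝔥₀}`
    (∃ X : L, ∃ _ : X ∈ 𝔥₀,
      ∃ hmap : 𝔥₀ ≤ 𝔥₀.comap (LieAlgebra.ad ℝ L X),
        rho (Submodule.mapQ 𝔥₀ 𝔥₀ (LieAlgebra.ad ℝ L X) hmap) <
          rho ((LieAlgebra.ad ℝ L X).restrict fun x hx => hmap hx)) :=
  complex_ideal_not_rho_le_general
    (J := { J with map_lie' := fun {x m} => by simp [hJ] })
    (fun x => by simp [hJ, smul_smul]) hwit h𝔥₀
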